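/- Let f ∈ ℂ[x_0,…,x_n]_d be a homogeneous polynomial such that V(f) is not a cone (Ann(f)_1 = 0), and let 1 ≤ k ≤ d−1. Then: (a) the transcendence degree over ℂ of the subfield of ℂ(x_0,…,x_n) generated by the k-th order partial derivatives {∂^α f : |α| = k} equals the rank, over the field ℂ(x_0,…,x_n), of the matrix (∂^{α+e_i} f)_{0≤i≤n, |α|=k} whose rows are indexed by the variables and columns by the multi-indices of length k; and (b) this rank is strictly less than n+1 if and only if for every linear form L ∈ A(f)_1 the multiplication map ×L^{d−k−1} : A(f)_1 → A(f)_{d−k} is not injective. -/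

import Mathlib

/-!
Write `K = ℂ(x_0, …, x_n)`.

Part (a) is the Jacobian criterion in characteristic zero. For a `K`-subspace `W` of `Ω[K⁄ℂ]`, the
elements `y` with `dy ∈ W` form a subfield that is algebraically closed in `K`
(`D_mem_of_isAlgebraic`). Hence the differentials of a transcendence basis of the field generated
by a set `s` span the same subspace as the differentials of `s`. They are linearly independent:
extended to a transcendence basis of `K`, they become `n + 1` vectors spanning the
`(n + 1)`-dimensional space `Ω[K⁄ℂ]` (`linearIndependent_D`). So the transcendence degree is the
dimension of the span of the differentials of `s` (`exists_isTranscendenceBasis_adjoin`), which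
for the partial derivatives of order `k` is the rank of the mixed Hessian (`rank_mixedHess_eq`).

For part (b), let `L = ∑ a_i X_i`, `q = ∑ c_i X_i` and `m = d - k - 1`. The form
`(L^m q)(f)` has degree `k`, so it vanishes iff its derivatives of order `k` do. Since
`L^m(g) = m! g(a)` for a form `g` of degree `m`, these derivatives are `m!` times the entries of
`c M(a)`, where `M` is the mixed Hessian (`DopL_eq_zero_iff`). Thus `×L^m` fails to be injective
on linear forms iff `M(a)` has rank less than `n + 1`. This happens for all `a` iff all maximal
minors of `M` are the zero polynomial, i.e. iff `M` has generic rank less than `n + 1`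
(`generic_rank_lt_iff`).
-/

open MvPolynomial Module

/-- The differential operator `∂^α` on `ℂ[x_0,…,x_{N-1}]` given by a multi-index
`α : Fin N → ℕ`. -/
noncomputable def pd {N : ℕ} (α : Fin N → ℕ) :
    Module.End ℂ (MvPolynomial (Fin N) ℂ) :=
  (List.ofFn fun i =>
    ((MvPolynomial.pderiv (R := ℂ) i).toLinearMap :
      Module.End ℂ (MvPolynomial (Fin N) ℂ)) ^ (α i)).prod

/-- Apolarity action: the `ℂ`-linear map `q ↦ q(f)` sending a differential operator
`q ∈ Q = ℂ[X_0,…,X_n]` to its action on `f`; it sends the monomial `X^α` to `∂^α f`. -/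
noncomputable def DopL {N : ℕ} (f : MvPolynomial (Fin N) ℂ) :
    MvPolynomial (Fin N) ℂ →ₗ[ℂ] MvPolynomial (Fin N) ℂ :=
  (MvPolynomial.basisMonomials (Fin N) ℂ).constr ℂ (fun α => pd (fun i => α i) f)

/-- The multi-index of length `k` attached to an element of `Sym (Fin N) k`. -/
noncomputable def symIdx {N k : ℕ} (s : Sym (Fin N) k) : Fin N → ℕ :=
  fun i => Multiset.count i (s : Multiset (Fin N))

/-- The mixed Hessian `Hess^{(1,k)}_f = (∂^{α+e_i} f)_{0≤i≤n, |α|=k}`, with rows indexed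
by the variables and columns by the multi-indices of length `k`, viewed as a matrix over
the field `ℂ(x_0,…,x_n)`. -/
noncomputable def mixedHess {N k : ℕ} (f : MvPolynomial (Fin N) ℂ) :
    Matrix (Fin N) (Sym (Fin N) k) (FractionRing (MvPolynomial (Fin N) ℂ)) :=
  Matrix.of fun i s =>
    algebraMap (MvPolynomial (Fin N) ℂ) (FractionRing (MvPolynomial (Fin N) ℂ))
      (pd (symIdx s) (pderiv i f))

/-- The subfield of `ℂ(x_0,…,x_n)` generated over `ℂ` by the `k`-th order partial
derivatives of `f`. -/
noncomputable def partialsField {N : ℕ} (f : MvPolynomial (Fin N) ℂ) (k : ℕ) :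
    IntermediateField ℂ (FractionRing (MvPolynomial (Fin N) ℂ)) :=
  IntermediateField.adjoin ℂ
    {y | ∃ α : Fin N → ℕ, (∑ i, α i) = k ∧
      y = algebraMap (MvPolynomial (Fin N) ℂ) (FractionRing (MvPolynomial (Fin N) ℂ))
            (pd α f)}


/-! ### Differentials and algebraic dependence -/

section Jacobian

open KaehlerDifferential

variable {F K : Type*} [Field F] [Field K] [Algebra F K]

/-- The elements of `K` whose differential lies in a given `K`-subspace `W` of `Ω[K⁄F]`;
they form an intermediate field. -/
noncomputable def fieldOfDifferentials (W : Submodule K (Ω[K⁄F])) : IntermediateField F K where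
  carrier := {y | D F K y ∈ W}
  mul_mem' {a b} ha hb := by
    simp only [Set.mem_ofPred_eq, Derivation.leibniz] at *
    exact W.add_mem (W.smul_mem _ hb) (W.smul_mem _ ha)
  add_mem' {a b} ha hb := by
    simp only [Set.mem_ofPred_eq, map_add] at *
    exact W.add_mem ha hb
  algebraMap_mem' r := by simp
  inv_mem' a ha := by
    simp only [Set.mem_ofPred_eq, Derivation.leibniz_inv] at *
    exact W.smul_mem _ ha

lemma mem_fieldOfDifferentials {W : Submodule K (Ω[K⁄F])} {y : K} :
    y ∈ fieldOfDifferentials W ↔ D F K y ∈ W := Iff.rfl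

/-- In characteristic zero the field `{y | dy ∈ W}` is algebraically closed in `K`: modulo `W`
the differential `d` is linear over this field, so applying it to `p(y) = 0`, with `p` the
minimal polynomial of `y`, gives `p'(y) dy = 0`, and `p'(y) ≠ 0`. -/
lemma D_mem_of_isAlgebraic [CharZero F] (W : Submodule K (Ω[K⁄F])) {y : K}
    (hy : IsAlgebraic (fieldOfDifferentials W) y) : D F K y ∈ W := by
  have : CharZero (fieldOfDifferentials W) :=
    charZero_of_injective_algebraMap (algebraMap F (fieldOfDifferentials W)).injective
  let D₀ : Derivation F K (Ω[K⁄F] ⧸ W) := W.mkQ.compDer (D F K)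
  have hD₀ : ∀ z, D₀ z = W.mkQ (D F K z) := fun _ => rfl
  let D₁ : Derivation (fieldOfDifferentials W) K (Ω[K⁄F] ⧸ W) :=
    { toFun := D₀
      map_add' := D₀.map_add
      map_smul' := fun c z => by
        have hc : D₀ (c : K) = 0 := by
          rw [hD₀]; exact (Submodule.Quotient.mk_eq_zero W).2 c.2
        have : c • z = (c : K) * z := rfl
        rw [this, Derivation.leibniz, hc, smul_zero, add_zero]
        rfl
      map_one_eq_zero' := D₀.map_one_eq_zero
      leibniz' := D₀.leibniz }
  have h := D₁.map_aeval (minpoly (fieldOfDifferentials W) y) y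
  rw [minpoly.aeval, map_zero] at h
  have hsep := (minpoly.irreducible hy.isIntegral).separable
  have hne := hsep.aeval_derivative_ne_zero (minpoly.aeval _ y)
  have h0 : D₁ y = 0 := (smul_eq_zero.1 h.symm).resolve_left hne
  exact (Submodule.Quotient.mk_eq_zero W).1 h0

lemma D_mem_span_of_isAlgebraic [CharZero F] {s : Set K} {y : K}
    (hy : IsAlgebraic (Algebra.adjoin F s) y) :
    D F K y ∈ Submodule.span K (D F K '' s) := by
  apply D_mem_of_isAlgebraic
  have hle : Algebra.adjoin F s ≤
      (fieldOfDifferentials (Submodule.span K (D F K '' s))).toSubalgebra :=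
    Algebra.adjoin_le fun x hx => Submodule.subset_span ⟨x, hx, rfl⟩
  obtain ⟨p, hp, hpy⟩ := hy
  refine ⟨p.map (Subalgebra.inclusion hle).toRingHom, ?_, ?_⟩
  · exact (Polynomial.map_ne_zero_iff (Subalgebra.inclusion_injective hle)).2 hp
  · rw [← hpy, Polynomial.aeval_def, Polynomial.aeval_def, Polynomial.eval₂_map]
    rfl

/-- Algebraically independent elements have linearly independent differentials, provided that
`Ω[K⁄F]` has the dimension predicted by a transcendence basis of `K`: extend to a transcendence
basis, whose differentials span `Ω[K⁄F]` and are as many as its dimension. -/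
lemma linearIndependent_D [CharZero F] [Module.Finite K (Ω[K⁄F])] {N : ℕ} {b : Fin N → K}
    (hb : IsTranscendenceBasis F b) (hN : finrank K (Ω[K⁄F]) = N)
    {ι : Type*} {x : ι → K} (hx : AlgebraicIndependent F x) :
    LinearIndependent K (fun i => D F K (x i)) := by
  obtain ⟨t, hst, ht⟩ := exists_isTranscendenceBasis_superset
    ((algebraicIndependent_subtype_range hx.injective).2 hx)
  have hcard := hb.lift_cardinalMk_eq ht
  simp only [Cardinal.mk_fin, Cardinal.lift_natCast, Cardinal.lift_uzero] at hcard
  have hfin : Finite t := Cardinal.lt_aleph0_iff_finite.1 (hcard ▸ Cardinal.natCast_lt_aleph0)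
  have := Fintype.ofFinite t
  have hcard' : Fintype.card t = finrank K (Ω[K⁄F]) := by
    rw [hN]
    rw [Cardinal.mk_fintype] at hcard
    exact_mod_cast hcard.symm
  have hli : LinearIndependent K (fun i : t => D F K (i : K)) := by
    refine linearIndependent_of_top_le_span_of_card_eq_finrank ?_ hcard'
    rw [← span_range_derivation, Submodule.span_le]
    rintro _ ⟨y, rfl⟩
    have := ht.isAlgebraic.isAlgebraic y
    rw [Subtype.range_coe] at this
    have h2 := D_mem_span_of_isAlgebraic this
    rwa [Set.image_eq_range] at h2
  exact hli.comp (fun i => ⟨x i, hst ⟨i, rfl⟩⟩) fun i j h =>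
    hx.injective (congrArg Subtype.val h)

/-- The Jacobian criterion: the transcendence degree of a subfield generated by `s` is the
dimension of the space spanned by the differentials of `s`. -/
lemma exists_isTranscendenceBasis_adjoin [CharZero F] [Module.Finite K (Ω[K⁄F])] {N : ℕ}
    {b : Fin N → K} (hb : IsTranscendenceBasis F b) (hN : finrank K (Ω[K⁄F]) = N) (s : Set K) :
    ∃ x : Fin (finrank K (Submodule.span K (D F K '' s))) → IntermediateField.adjoin F s,
      IsTranscendenceBasis F x := by
  obtain ⟨ι, x, hx⟩ := exists_isTranscendenceBasis' F (IntermediateField.adjoin F s)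
  have hxK : AlgebraicIndependent F (fun i => (x i : K)) :=
    hx.1.map' (f := (IntermediateField.adjoin F s).val) Subtype.val_injective
  have hli := linearIndependent_D hb hN hxK
  have hspan : Submodule.span K (Set.range fun i => D F K (x i : K)) =
      Submodule.span K (D F K '' s) := by
    apply le_antisymm
    · rw [Submodule.span_le]
      rintro _ ⟨i, rfl⟩
      have hle : IntermediateField.adjoin F s ≤
          fieldOfDifferentials (Submodule.span K (D F K '' s)) :=
        IntermediateField.adjoin_le_iff.2 fun y hy => Submodule.subset_span ⟨y, hy, rfl⟩
      exact hle (x i).2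
    · rw [Submodule.span_le]
      rintro _ ⟨y, hy, rfl⟩
      have hy' : y ∈ IntermediateField.adjoin F s := IntermediateField.subset_adjoin F s hy
      obtain ⟨p, hp, hpy⟩ := hx.isAlgebraic_field.isAlgebraic ⟨y, hy'⟩
      apply D_mem_of_isAlgebraic
      have hle : (IntermediateField.adjoin F (Set.range x)).map (IntermediateField.adjoin F s).val
          ≤ fieldOfDifferentials (Submodule.span K (Set.range fun i => D F K (x i : K))) := by
        rw [IntermediateField.adjoin_map, IntermediateField.adjoin_le_iff]
        rintro _ ⟨_, ⟨i, rfl⟩, rfl⟩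
        exact Submodule.subset_span ⟨i, rfl⟩
      let φ : IntermediateField.adjoin F (Set.range x) →+*
          fieldOfDifferentials (Submodule.span K (Set.range fun i => D F K (x i : K))) :=
        ((IntermediateField.inclusion hle).comp
          ((IntermediateField.adjoin F (Set.range x)).equivMap
            (IntermediateField.adjoin F s).val).toAlgHom).toRingHom
      refine ⟨p.map φ, (Polynomial.map_ne_zero_iff φ.injective).2 hp, ?_⟩
      have := congrArg (IntermediateField.adjoin F s).val hpy
      rw [map_zero] at this
      rw [← this, Polynomial.aeval_def, Polynomial.aeval_def, Polynomial.eval₂_map]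
      change _ = (IntermediateField.adjoin F s).val.toRingHom _
      rw [Polynomial.hom_eval₂]
      rfl
  have : Finite ι := hli.finite
  have := Fintype.ofFinite ι
  have hcard : finrank K (Submodule.span K (D F K '' s)) = Fintype.card ι := by
    rw [← hspan, finrank_span_eq_card hli]
  rw [hcard]
  exact ⟨x ∘ (Fintype.equivFin ι).symm, hx.comp_equiv _⟩

end Jacobian

/-! ### Maximal minors -/

section Minors

variable {K : Type*} [Field K] {N : ℕ} {S : Type*} [Fintype S]

lemma rank_lt_iff_exists_vecMul (M : Matrix (Fin N) S K) :
    M.rank < N ↔ ∃ v, v ≠ 0 ∧ Matrix.vecMul v M = 0 := by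
  have hle : M.rank ≤ N := by simpa using M.rank_le_card_height
  constructor
  · intro h
    by_contra! hcon
    have hinj : Function.Injective M.vecMul := by
      have : LinearMap.ker M.vecMulLinear = ⊥ :=
        LinearMap.ker_eq_bot'.2 fun v hv => by
          by_contra hne
          exact hcon v hne hv
      exact LinearMap.ker_eq_bot.1 this
    have := (Matrix.vecMul_injective_iff.1 hinj).rank_matrix
    simp at this
    omega
  · rintro ⟨v, hv, hvM⟩
    refine lt_of_le_of_ne hle fun h => hv ?_
    have hli : LinearIndependent K M.row := by
      rw [linearIndependent_iff_card_eq_finrank_span, Set.finrank,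
        ← Matrix.rank_eq_finrank_span_row, h, Fintype.card_fin]
    exact Matrix.vecMul_injective_iff.2 hli (by simpa using hvM)

lemma rank_lt_iff_forall_det (M : Matrix (Fin N) S K) :
    M.rank < N ↔ ∀ e : Fin N → S, (M.submatrix id e).det = 0 := by
  constructor
  · intro h e
    obtain ⟨v, hv, hvM⟩ := (rank_lt_iff_exists_vecMul M).1 h
    refine Matrix.exists_vecMul_eq_zero_iff.1 ⟨v, hv, ?_⟩
    funext j
    exact congrFun hvM (e j)
  · intro h
    have hle : M.rank ≤ N := by simpa using M.rank_le_card_height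
    refine lt_of_le_of_ne hle fun heq => ?_
    obtain ⟨κ, a, -, hsp, hli⟩ := exists_linearIndependent' K M.col
    have : Finite κ := hli.finite
    have := Fintype.ofFinite κ
    have hcard : Fintype.card κ = N := by
      rw [← finrank_span_eq_card hli, hsp, ← Matrix.rank_eq_finrank_span_cols, heq]
    let g : Fin N ≃ κ := (finCongr hcard.symm).trans (Fintype.equivFin κ).symm
    have hli' : LinearIndependent K (M.submatrix id (a ∘ g)).col := hli.comp g g.injective
    rw [Matrix.linearIndependent_cols_iff_isUnit, Matrix.isUnit_iff_isUnit_det, h] at hli'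
    exact not_isUnit_zero hli'

/-- The generic rank of a polynomial matrix is not full iff its rank at every point is not full:
both say that all maximal minors are zero. -/
lemma generic_rank_lt_iff {R : Type*} [Field R] [Infinite R]
    (M : Matrix (Fin N) S (MvPolynomial (Fin N) R)) :
    (M.map (algebraMap _ (FractionRing (MvPolynomial (Fin N) R)))).rank < N ↔
      ∀ a : Fin N → R, ∃ v, v ≠ 0 ∧ Matrix.vecMul v (M.map (eval a)) = 0 := by
  have h1 (e : Fin N → S) :
      ((M.map (algebraMap _ (FractionRing (MvPolynomial (Fin N) R)))).submatrix id e).det =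
        algebraMap _ _ (M.submatrix id e).det := by
    rw [RingHom.map_det]; rfl
  have h2 (a : Fin N → R) (e : Fin N → S) :
      ((M.map (eval a)).submatrix id e).det = eval a (M.submatrix id e).det := by
    rw [RingHom.map_det]; rfl
  simp_rw [← rank_lt_iff_exists_vecMul, rank_lt_iff_forall_det, h1, h2,
    FaithfulSMul.algebraMap_eq_zero_iff]
  constructor
  · intro h a e
    rw [h e, map_zero]
  · intro h e
    exact MvPolynomial.funext fun a => by rw [h a e, map_zero]

end Minors

/-! ### Higher partial derivatives and the apolarity action -/

lemma prod_ofFn_pow_add_single {M : Type*} [Monoid M] {N : ℕ} (g : Fin N → M)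
    (hg : ∀ i j, Commute (g i) (g j)) (α : Fin N → ℕ) (j : Fin N) :
    (List.ofFn fun i => g i ^ (α + Pi.single j 1 : Fin N → ℕ) i).prod =
      g j * (List.ofFn fun i => g i ^ α i).prod := by
  induction N with
  | zero => exact j.elim0
  | succ N ih =>
    rw [List.ofFn_succ, List.ofFn_succ, List.prod_cons, List.prod_cons]
    refine Fin.cases ?_ (fun j => ?_) j
    · simp [pow_succ', mul_assoc]
    · have hs : (fun i : Fin N => g i.succ ^ (α + Pi.single j.succ 1 : Fin (N + 1) → ℕ) i.succ) =
          fun i : Fin N => g i.succ ^ ((fun i : Fin N => α i.succ) + Pi.single j 1 : Fin N → ℕ) i := by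
        funext i
        simp [Pi.single_apply]
      rw [hs, ih (fun i => g i.succ) (fun _ _ => hg _ _), ← mul_assoc, ← mul_assoc]
      congr 1
      simpa using ((hg 0 j.succ).pow_left (α 0)).eq

section Calculus

variable {N : ℕ}

lemma pderiv_pderiv_comm (i j : Fin N) (p : MvPolynomial (Fin N) ℂ) :
    pderiv i (pderiv j p) = pderiv j (pderiv i p) := by
  have : ⁅pderiv (R := ℂ) i, pderiv (R := ℂ) j⁆ = 0 := by
    apply MvPolynomial.derivation_ext
    intro k
    simp only [Derivation.commutator_apply, pderiv_X, Pi.single_apply]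
    split_ifs <;> simp
  have h := Derivation.congr_fun this p
  rw [Derivation.commutator_apply] at h
  exact sub_eq_zero.1 h

lemma pd_zero (p : MvPolynomial (Fin N) ℂ) : pd 0 p = p := by
  simp [pd]

/-- The factors of `pd` commute, so one more derivative can be pulled out in front. -/
lemma pd_add_single (α : Fin N → ℕ) (j : Fin N) (p : MvPolynomial (Fin N) ℂ) :
    pd (α + Pi.single j 1) p = pderiv j (pd α p) := by
  have h := prod_ofFn_pow_add_single
    (fun i => ((pderiv (R := ℂ) i).toLinearMap : Module.End ℂ (MvPolynomial (Fin N) ℂ)))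
    (fun i j => LinearMap.ext fun p => pderiv_pderiv_comm i j p) α j
  exact LinearMap.congr_fun h p

lemma multiIndex_induction {P : (Fin N → ℕ) → Prop} (h0 : P 0)
    (h1 : ∀ α j, P α → P (α + Pi.single j 1)) (α : Fin N → ℕ) : P α := by
  obtain ⟨m, hm⟩ : ∃ m, ∑ i, α i = m := ⟨_, rfl⟩
  induction m generalizing α with
  | zero =>
    have : α = 0 := funext fun i => by simpa using Finset.sum_eq_zero_iff.1 hm i (Finset.mem_univ i)
    rwa [this]
  | succ m ih =>
    obtain ⟨j, hj⟩ : ∃ j, α j ≠ 0 := by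
      by_contra! h
      simp [h] at hm
    have hα : α = (α - Pi.single j 1) + Pi.single j 1 := by
      funext i
      by_cases hij : i = j
      · subst hij; simp; omega
      · simp [hij]
    rw [hα]
    refine h1 _ _ (ih _ ?_)
    rw [hα] at hm
    simpa [Finset.sum_add_distrib] using hm

lemma pd_pderiv (α : Fin N → ℕ) (j : Fin N) (p : MvPolynomial (Fin N) ℂ) :
    pd α (pderiv j p) = pderiv j (pd α p) := by
  induction α using multiIndex_induction with
  | h0 => simp [pd_zero]
  | h1 α i ih => rw [pd_add_single, pd_add_single, ih, pderiv_pderiv_comm]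

lemma pd_isHomogeneous {p : MvPolynomial (Fin N) ℂ} {e : ℕ} (hp : p.IsHomogeneous e)
    (α : Fin N → ℕ) : (pd α p).IsHomogeneous (e - ∑ i, α i) := by
  induction α using multiIndex_induction with
  | h0 => simpa [pd_zero] using hp
  | h1 α i ih =>
    rw [pd_add_single]
    simpa [Finset.sum_add_distrib, Nat.sub_sub] using ih.pderiv (i := i)

/-- A form of degree `e` all of whose partial derivatives of order `e` vanish is zero, by Euler's
identity and induction on `e`. -/
lemma eq_zero_of_pd_eq_zero {p : MvPolynomial (Fin N) ℂ} {e : ℕ} (hp : p.IsHomogeneous e)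
    (h : ∀ α : Fin N → ℕ, ∑ i, α i = e → pd α p = 0) : p = 0 := by
  induction e generalizing p with
  | zero => simpa [pd_zero] using h 0 (by simp)
  | succ e ih =>
    have hd : ∀ j, pderiv j p = 0 := fun j =>
      ih (by simpa using hp.pderiv (i := j)) fun α hα => by
        rw [pd_pderiv, ← pd_add_single]
        exact h _ (by simp [Finset.sum_add_distrib, hα])
    have hE := hp.sum_X_mul_pderiv
    simp only [hd, mul_zero, Finset.sum_const_zero] at hE
    exact (smul_eq_zero.1 hE.symm).resolve_left (Nat.succ_ne_zero e)

/-- The directional derivative `∑ i, a i ∂/∂x_i`. -/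
noncomputable def dirDeriv (a : Fin N → ℂ) : Module.End ℂ (MvPolynomial (Fin N) ℂ) :=
  ∑ i, a i • (pderiv (R := ℂ) i).toLinearMap

lemma dirDeriv_apply (a : Fin N → ℂ) (p : MvPolynomial (Fin N) ℂ) :
    dirDeriv a p = ∑ i, a i • pderiv i p := by
  simp [dirDeriv]

lemma dirDeriv_isHomogeneous (a : Fin N → ℂ) {p : MvPolynomial (Fin N) ℂ} {e : ℕ}
    (hp : p.IsHomogeneous e) : (dirDeriv a p).IsHomogeneous (e - 1) := by
  rw [dirDeriv_apply]
  exact IsHomogeneous.sum _ _ _ fun i _ =>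
    (homogeneousSubmodule (Fin N) ℂ (e - 1)).smul_mem (a i) hp.pderiv

lemma dirDeriv_pow_isHomogeneous (a : Fin N → ℂ) {p : MvPolynomial (Fin N) ℂ} {e : ℕ}
    (hp : p.IsHomogeneous e) (m : ℕ) : ((dirDeriv a ^ m) p).IsHomogeneous (e - m) := by
  induction m with
  | zero => simpa using hp
  | succ m ih =>
    rw [pow_succ', Module.End.mul_apply]
    simpa [Nat.sub_sub] using dirDeriv_isHomogeneous a ih

lemma pd_dirDeriv_pow (α : Fin N → ℕ) (a : Fin N → ℂ) (m : ℕ) (p : MvPolynomial (Fin N) ℂ) :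
    pd α ((dirDeriv a ^ m) p) = (dirDeriv a ^ m) (pd α p) := by
  induction m with
  | zero => simp
  | succ m ih =>
    rw [pow_succ', Module.End.mul_apply, Module.End.mul_apply, ← ih, dirDeriv_apply,
      dirDeriv_apply, map_sum]
    simp [pd_pderiv]

/-- Differentiating a form of degree `m` a total of `m` times in the direction `a` gives
`m!` times its value at `a`. -/
lemma dirDeriv_pow_eq (a : Fin N → ℂ) {p : MvPolynomial (Fin N) ℂ} {m : ℕ}
    (hp : p.IsHomogeneous m) :
    (dirDeriv a ^ m) p = C ((m.factorial : ℂ) * eval a p) := by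
  induction m generalizing p with
  | zero =>
    rw [← totalDegree_zero_iff_isHomogeneous, totalDegree_eq_zero_iff_eq_C] at hp
    rw [hp]
    simp
  | succ m ih =>
    rw [pow_succ, Module.End.mul_apply, ih (by simpa using dirDeriv_isHomogeneous a hp)]
    have hE := congrArg (eval a) hp.sum_X_mul_pderiv
    have : eval a (dirDeriv a p) = (m + 1 : ℕ) * eval a p := by
      rw [dirDeriv_apply]
      simpa [smul_eval] using hE
    rw [this, Nat.factorial_succ]
    congr 1
    push_cast
    ring

lemma DopL_monomial (f : MvPolynomial (Fin N) ℂ) (α : Fin N →₀ ℕ) :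
    DopL f (monomial α 1) = pd α f := by
  have := (MvPolynomial.basisMonomials (Fin N) ℂ).constr_basis ℂ (fun α => pd (fun i => α i) f) α
  rwa [coe_basisMonomials] at this

lemma DopL_X_mul (f q : MvPolynomial (Fin N) ℂ) (j : Fin N) :
    DopL f (X j * q) = pderiv j (DopL f q) := by
  have : (DopL f).comp (LinearMap.mulLeft ℂ (X j)) = (pderiv j).toLinearMap.comp (DopL f) := by
    refine (MvPolynomial.basisMonomials (Fin N) ℂ).ext fun α => ?_
    rw [coe_basisMonomials]
    simp only [LinearMap.comp_apply, LinearMap.mulLeft_apply]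
    have hX : (X j * monomial α 1 : MvPolynomial (Fin N) ℂ) =
        monomial (α + Finsupp.single j 1) 1 := by
      rw [X, monomial_mul, add_comm, one_mul]
    have hα : ((α + Finsupp.single j 1 : Fin N →₀ ℕ) : Fin N → ℕ) = ⇑α + Pi.single j 1 := by
      rw [Finsupp.coe_add, Finsupp.single_eq_pi_single]
    rw [hX, DopL_monomial, DopL_monomial, hα, pd_add_single]
    rfl
  exact LinearMap.congr_fun this q

lemma DopL_one (f : MvPolynomial (Fin N) ℂ) : DopL f 1 = f := by
  have := DopL_monomial f 0
  simpa [pd_zero] using this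

/-- The linear form with coefficient vector `a`. -/
noncomputable def linForm (a : Fin N → ℂ) : MvPolynomial (Fin N) ℂ := ∑ i, a i • X i

lemma linForm_isHomogeneous (a : Fin N → ℂ) : (linForm a).IsHomogeneous 1 :=
  IsHomogeneous.sum _ _ _ fun i _ =>
    (homogeneousSubmodule (Fin N) ℂ 1).smul_mem (a i) (isHomogeneous_X ℂ i)

lemma coeff_linForm (a : Fin N → ℂ) (j : Fin N) :
    coeff (Finsupp.single j 1) (linForm a) = a j := by
  simp [linForm, coeff_sum, coeff_X, Finsupp.single_left_inj]

lemma linForm_ne_zero_iff (a : Fin N → ℂ) : linForm a ≠ 0 ↔ a ≠ 0 := by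
  rw [not_iff_not]
  constructor
  · intro h
    funext j
    rw [← coeff_linForm a j, h]
    simp
  · rintro rfl
    simp [linForm]

lemma exists_linForm_eq {L : MvPolynomial (Fin N) ℂ} (hL : L.IsHomogeneous 1) :
    ∃ a, linForm a = L := by
  refine ⟨fun i => eval (0 : Fin N → ℂ) (pderiv i L), ?_⟩
  have hE := hL.sum_X_mul_pderiv
  rw [one_smul] at hE
  rw [linForm, ← hE]
  refine Finset.sum_congr rfl fun i _ => ?_
  have h0 : (pderiv i L).IsHomogeneous 0 := by simpa using hL.pderiv (i := i)
  rw [← totalDegree_zero_iff_isHomogeneous, totalDegree_eq_zero_iff_eq_C] at h0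
  rw [hE, h0]
  simp [MvPolynomial.smul_eq_C_mul, mul_comm]

lemma DopL_linForm_mul (f q : MvPolynomial (Fin N) ℂ) (a : Fin N → ℂ) :
    DopL f (linForm a * q) = dirDeriv a (DopL f q) := by
  simp [linForm, Finset.sum_mul, dirDeriv_apply, DopL_X_mul]

lemma DopL_linForm_pow_mul (f q : MvPolynomial (Fin N) ℂ) (a : Fin N → ℂ) (m : ℕ) :
    DopL f (linForm a ^ m * q) = (dirDeriv a ^ m) (DopL f q) := by
  induction m with
  | zero => simp
  | succ m ih =>
    rw [pow_succ', mul_assoc, DopL_linForm_mul, ih, pow_succ', Module.End.mul_apply]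

lemma exists_symIdx_eq {k : ℕ} (α : Fin N → ℕ) (hα : ∑ i, α i = k) :
    ∃ s : Sym (Fin N) k, symIdx s = α := by
  refine ⟨(Sym.equivNatSumOfFintype (Fin N) k).symm ⟨α, hα⟩, ?_⟩
  have := (Sym.equivNatSumOfFintype (Fin N) k).apply_symm_apply ⟨α, hα⟩
  exact congrArg Subtype.val this

lemma sum_symIdx {k : ℕ} (s : Sym (Fin N) k) : ∑ i, symIdx s i = k :=
  (Sym.equivNatSumOfFintype (Fin N) k s).2

/-- With `M` the polynomial matrix `(∂^{α+e_i} f)`, the operator `L_a^{d-k-1} · L_c` kills `f` iff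
`c` is in the left kernel of `M(a)`: the derivatives of order `k` of the form
`L_a^{d-k-1} L_c (f)` of degree `k` are the entries of `c M(a)`, up to the factor
`(d-k-1)!`. -/
lemma DopL_eq_zero_iff {d k : ℕ} {f : MvPolynomial (Fin N) ℂ} (hf : f.IsHomogeneous d)
    (hk : k + 1 ≤ d) (a c : Fin N → ℂ) :
    DopL f (linForm a ^ (d - k - 1) * linForm c) = 0 ↔
      Matrix.vecMul c ((Matrix.of fun i (s : Sym (Fin N) k) =>
        pd (symIdx s) (pderiv i f)).map (eval a)) = 0 := by
  have hc : DopL f (linForm c) = dirDeriv c f := by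
    rw [← mul_one (linForm c), DopL_linForm_mul, DopL_one]
  have hg : (dirDeriv c f).IsHomogeneous (d - 1) := dirDeriv_isHomogeneous c hf
  have hh := dirDeriv_pow_isHomogeneous a hg (d - k - 1)
  rw [show d - 1 - (d - k - 1) = k by omega] at hh
  have hentry (s : Sym (Fin N) k) :
      pd (symIdx s) ((dirDeriv a ^ (d - k - 1)) (dirDeriv c f)) =
        C (((d - k - 1).factorial : ℂ) * Matrix.vecMul c ((Matrix.of fun i (s : Sym (Fin N) k) =>
          pd (symIdx s) (pderiv i f)).map (eval a)) s) := by
    have hs := pd_isHomogeneous hg (symIdx s)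
    rw [sum_symIdx, show d - 1 - k = d - k - 1 by omega] at hs
    rw [pd_dirDeriv_pow, dirDeriv_pow_eq a hs]
    congr 2
    simp [dirDeriv_apply, smul_eval, Matrix.vecMul, dotProduct]
  rw [DopL_linForm_pow_mul, hc]
  constructor
  · intro h
    funext s
    have h1 := hentry s
    rw [h, map_zero, eq_comm, C_eq_zero] at h1
    exact (mul_eq_zero.1 h1).resolve_left (by exact_mod_cast Nat.factorial_ne_zero _)
  · intro h
    refine eq_zero_of_pd_eq_zero hh fun α hα => ?_
    obtain ⟨s, rfl⟩ := exists_symIdx_eq α hα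
    rw [hentry, h]
    simp

end Calculus

/-! ### The function field -/

section FunctionField

open KaehlerDifferential

variable (N : ℕ)

/-- The basis `dx_0, …, dx_{N-1}` of the differentials of `ℂ(x_0, …, x_{N-1})`. -/
noncomputable def differentialBasis :
    Basis (Fin N) (FractionRing (MvPolynomial (Fin N) ℂ))
      (Ω[FractionRing (MvPolynomial (Fin N) ℂ)⁄ℂ]) :=
  (mvPolynomialBasis ℂ (Fin N)).ofIsLocalizedModule _ (nonZeroDivisors (MvPolynomial (Fin N) ℂ))
    (KaehlerDifferential.map ℂ ℂ (MvPolynomial (Fin N) ℂ)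
      (FractionRing (MvPolynomial (Fin N) ℂ)))

lemma differentialBasis_repr_D (p : MvPolynomial (Fin N) ℂ) (i : Fin N) :
    (differentialBasis N).repr (D ℂ _ (algebraMap _ _ p)) i =
      algebraMap _ (FractionRing (MvPolynomial (Fin N) ℂ)) (pderiv i p) := by
  rw [← KaehlerDifferential.map_D ℂ ℂ (MvPolynomial (Fin N) ℂ), differentialBasis,
    Module.Basis.ofIsLocalizedModule_repr_apply, mvPolynomialBasis_repr_apply]

lemma isTranscendenceBasis_X :
    IsTranscendenceBasis ℂ (algebraMap (MvPolynomial (Fin N) ℂ)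
      (FractionRing (MvPolynomial (Fin N) ℂ)) ∘ X) := by
  have : Algebra.IsAlgebraic (MvPolynomial (Fin N) ℂ) (FractionRing (MvPolynomial (Fin N) ℂ)) :=
    IsLocalization.isAlgebraic _ (nonZeroDivisors _)
  exact (IsTranscendenceBasis.mvPolynomial (Fin N) ℂ).algebraMap_comp

/-- In the basis `dx_i`, the columns of the mixed Hessian are the differentials of the partial
derivatives of order `k`, because `∂^{α+e_i} f = ∂_i (∂^α f)`. -/
lemma rank_mixedHess_eq {N k : ℕ} (f : MvPolynomial (Fin N) ℂ) :
    (mixedHess (k := k) f).rank = finrank (FractionRing (MvPolynomial (Fin N) ℂ))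
      (Submodule.span (FractionRing (MvPolynomial (Fin N) ℂ))
        (D ℂ (FractionRing (MvPolynomial (Fin N) ℂ)) ''
          {y | ∃ α : Fin N → ℕ, (∑ i, α i) = k ∧
            y = algebraMap (MvPolynomial (Fin N) ℂ) (FractionRing (MvPolynomial (Fin N) ℂ))
              (pd α f)})) := by
  rw [Matrix.rank_eq_finrank_span_cols,
    ← LinearEquiv.finrank_map_eq (differentialBasis N).equivFun, Submodule.map_span]
  refine congrArg (fun t : Set (Fin N → FractionRing (MvPolynomial (Fin N) ℂ)) =>
    finrank _ (Submodule.span (FractionRing (MvPolynomial (Fin N) ℂ)) t)) (Set.ext fun v => ?_)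
  constructor
  · rintro ⟨s, rfl⟩
    refine ⟨_, ⟨_, ⟨symIdx s, sum_symIdx s, rfl⟩, rfl⟩, ?_⟩
    funext i
    simp [mixedHess, differentialBasis_repr_D, pd_pderiv]
  · rintro ⟨_, ⟨_, ⟨α, hα, rfl⟩, rfl⟩, rfl⟩
    obtain ⟨s, rfl⟩ := exists_symIdx_eq α hα
    refine ⟨s, ?_⟩
    funext i
    simp [mixedHess, differentialBasis_repr_D, pd_pderiv]

end FunctionField

/-- **Theorem.** Let `f` be homogeneous of degree `d` with `V(f)` not a cone
(`Ann(f)_1 = 0`) and let `1 ≤ k ≤ d−1`.  Then (a) the transcendence degree over `ℂ` of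
the subfield of `ℂ(x_0,…,x_n)` generated by the `k`-th partial derivatives of `f` equals
the rank of the mixed Hessian matrix `(∂^{α+e_i}f)` over `ℂ(x_0,…,x_n)` (i.e. this field
has a transcendence basis indexed by `Fin rank`); and (b) this rank is `< n+1` iff for
every linear form `L ∈ A(f)_1 = Q_1` the multiplication map
`×L^{d−k−1} : A(f)_1 → A(f)_{d−k}` is not injective. -/
theorem polar_image_dim_eq_mixed_hessian_rank
    {n d k : ℕ} (f : MvPolynomial (Fin (n + 1)) ℂ) (hf : f.IsHomogeneous d)
    (hcone : homogeneousSubmodule (Fin (n + 1)) ℂ 1 ⊓ LinearMap.ker (DopL f) = ⊥)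
    (hk1 : 1 ≤ k) (hk : k + 1 ≤ d) :
    (∃ x : Fin ((mixedHess (k := k) f).rank) → (partialsField f k),
      IsTranscendenceBasis ℂ x) ∧
    ((mixedHess (k := k) f).rank < n + 1 ↔
      ∀ L ∈ homogeneousSubmodule (Fin (n + 1)) ℂ 1,
        ∃ q ∈ homogeneousSubmodule (Fin (n + 1)) ℂ 1,
          q ≠ 0 ∧ DopL f (L ^ (d - k - 1) * q) = 0) := by
  constructor
  · rw [rank_mixedHess_eq]
    have := Module.Finite.of_basis (differentialBasis (n + 1))
    exact exists_isTranscendenceBasis_adjoin (isTranscendenceBasis_X (n + 1))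
      (by simpa using finrank_eq_card_basis (differentialBasis (n + 1))) _
  · refine (generic_rank_lt_iff (Matrix.of fun i (s : Sym (Fin (n + 1)) k) =>
      pd (symIdx s) (pderiv i f))).trans ?_
    constructor
    · intro h L hL
      obtain ⟨a, rfl⟩ := exists_linForm_eq hL
      obtain ⟨c, hc, hcM⟩ := h a
      exact ⟨linForm c, linForm_isHomogeneous c, (linForm_ne_zero_iff c).2 hc,
        (DopL_eq_zero_iff hf hk a c).2 hcM⟩
    · intro h a
      obtain ⟨q, hq, hq0, hqf⟩ := h (linForm a) (linForm_isHomogeneous a)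
      obtain ⟨c, rfl⟩ := exists_linForm_eq hq
      exact ⟨c, (linForm_ne_zero_iff c).1 hq0, (DopL_eq_zero_iff hf hk a c).1 hqf⟩
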